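/- Let E be a real normed vector space, let R : E → E be any map, and let Δt ≥ 0. Assume the forward-Euler step is nonexpansive from the origin, i.e. ‖u + Δt R(u)‖ ≤ ‖u‖ for all u ∈ E. Define, for f ∈ E, the third-order TVD Runge–Kutta update: f^{(1)} = f + Δt R(f); f^{(2)} = (1/4)(3 f + f^{(1)} + Δt R(f^{(1)})); f⁺ = (1/3)(f + 2 f^{(2)} + 2 Δt R(f^{(2)})). Then ‖f⁺‖ ≤ ‖f‖. -/

import Mathlib

/-!
Both later stages are convex combinations of a previous value with a forward Euler step:
`f⁽²⁾ = 3/4 f + 1/4 Φ(Φ f)` and `f⁺ = 1/3 f + 2/3 Φ(f⁽²⁾)`, where `Φ u = u + Δt R(u)`.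
Hence a convex set invariant under `Φ` is invariant under the whole update, and stability
is the case of the sublevel set `{u | φ u ≤ φ f}` of a quasiconvex functional such as the norm.
-/

open Set

section TVDRungeKutta

variable {𝕜 E : Type*} [Field 𝕜] [AddCommGroup E] [Module 𝕜 E]

/-- The forward Euler step of size `Δt` for the evolution equation `u' = R u`. -/
def eulerStep (R : E → E) (Δt : 𝕜) (u : E) : E :=
  u + Δt • R u

/-- The intermediate value `f⁽²⁾` of the third-order TVD Runge–Kutta method; the first
intermediate value `f⁽¹⁾` is `eulerStep R Δt f`. -/
def tvdRK3SecondStage (R : E → E) (Δt : 𝕜) (f : E) : E :=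
  (1 / 4 : 𝕜) • ((3 : 𝕜) • f + eulerStep R Δt f + Δt • R (eulerStep R Δt f))

/-- The updated value `f⁺` of the third-order TVD Runge–Kutta method. -/
def tvdRK3Step (R : E → E) (Δt : 𝕜) (f : E) : E :=
  (1 / 3 : 𝕜) • (f + (2 : 𝕜) • tvdRK3SecondStage R Δt f
    + (2 : 𝕜) • Δt • R (tvdRK3SecondStage R Δt f))

theorem tvdRK3SecondStage_eq_smul_add_smul (R : E → E) (Δt : 𝕜) (f : E) :
    tvdRK3SecondStage R Δt f =
      (3 / 4 : 𝕜) • f + (1 / 4 : 𝕜) • eulerStep R Δt (eulerStep R Δt f) := by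
  rw [tvdRK3SecondStage, eulerStep.eq_def R Δt (eulerStep R Δt f)]
  module

theorem tvdRK3Step_eq_smul_add_smul (R : E → E) (Δt : 𝕜) (f : E) :
    tvdRK3Step R Δt f =
      (1 / 3 : 𝕜) • f + (2 / 3 : 𝕜) • eulerStep R Δt (tvdRK3SecondStage R Δt f) := by
  rw [tvdRK3Step, eulerStep]
  module

variable [LinearOrder 𝕜] [IsStrictOrderedRing 𝕜] {R : E → E} {Δt : 𝕜} {K : Set E}

theorem mapsTo_tvdRK3SecondStage (hK : Convex 𝕜 K) (hEuler : MapsTo (eulerStep R Δt) K K) :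
    MapsTo (tvdRK3SecondStage R Δt) K K := by
  intro f hf
  rw [tvdRK3SecondStage_eq_smul_add_smul]
  exact hK hf (hEuler (hEuler hf)) (by norm_num) (by norm_num) (by norm_num)

theorem mapsTo_tvdRK3Step (hK : Convex 𝕜 K) (hEuler : MapsTo (eulerStep R Δt) K K) :
    MapsTo (tvdRK3Step R Δt) K K := by
  intro f hf
  rw [tvdRK3Step_eq_smul_add_smul]
  exact hK hf (hEuler (mapsTo_tvdRK3SecondStage hK hEuler hf))
    (by norm_num) (by norm_num) (by norm_num)

theorem stmt_9_general {β : Type*} [Preorder β] {φ : E → β} (hφ : QuasiconvexOn 𝕜 univ φ)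
    (hEuler : ∀ u, φ (eulerStep R Δt u) ≤ φ u) (f : E) : φ (tvdRK3Step R Δt f) ≤ φ f := by
  have sublevel_convex : Convex 𝕜 {u | φ u ≤ φ f} := by
    simpa only [mem_univ, true_and] using hφ (φ f)
  have sublevel_invariant : MapsTo (eulerStep R Δt) {u | φ u ≤ φ f} {u | φ u ≤ φ f} :=
    fun u hu => (hEuler u).trans hu
  exact mapsTo_tvdRK3Step sublevel_convex sublevel_invariant le_rfl

end TVDRungeKutta

/-- Stability of the third-order TVD Runge–Kutta method as a convex combination of
forward Euler steps (Section 2.3 of the paper): if the forward Euler step is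
nonexpansive from the origin, so is the full third-order TVD RK update. -/
theorem stmt_9 {E : Type*} [NormedAddCommGroup E] [NormedSpace ℝ E]
    (R : E → E) (Δt : ℝ) (hΔt : 0 ≤ Δt)
    (hEuler : ∀ u : E, ‖u + Δt • R u‖ ≤ ‖u‖) (f : E) :
    ‖(1 / 3 : ℝ) • (f + (2 : ℝ) • ((1 / 4 : ℝ) • ((3 : ℝ) • f + (f + Δt • R f)
          + Δt • R (f + Δt • R f)))
        + (2 : ℝ) • Δt • R ((1 / 4 : ℝ) • ((3 : ℝ) • f + (f + Δt • R f)
          + Δt • R (f + Δt • R f))))‖ ≤ ‖f‖ := by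
  exact stmt_9_general convexOn_univ_norm.quasiconvexOn hEuler f
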